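/- For every integer N ≥ 2, every real p > 1 and all positive reals f, F with f^p ≤ F, the infimum of ∫_{[0,1)} (M_N φ)^p dμ over all nonnegative measurable φ on [0,1) with ∫_{[0,1)} φ dμ = f and ∫_{[0,1)} φ^p dμ = F equals f^p + ((N^p − 1)/(N^p − N))·(F − f^p). -/

import Mathlib

/-!
Let `M_n` be the maximum of the averages of `φ` up to level `n`, and `K` the constant of the
theorem. Since consecutive averages grow by a factor of at most `N`, convexity of `t ↦ t ^ p` on
`[1, N]` shows that `∫ (M_n ^ p - K * M_n ^ (p - 1) * φ)` is nondecreasing in `n`; it starts at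
`(1 - K) * f ^ p`, and in the limit `φ ≤ M` gives `∫ M ^ (p - 1) * φ ≥ F`. This is the lower bound.

Equality holds as soon as an average that exceeds the running maximum does so by the full factor `N`
and `φ` only takes the values `0` and `M`. A function constant on each shell
`[N⁻¹ ^ (i + 1), N⁻¹ ^ i)` achieves this: choose `0` on the outer shell as long as the remaining
interval can still carry the prescribed mean and `p`-th moment, and the current mean otherwise. Its
maximal function is on each shell the mean over `[0, N⁻¹ ^ i)`, and these means attain the bound.
-/

open MeasureTheory Set Filter

/-- The `N`-adic interval `[k/N^m, (k+1)/N^m)` at level `m`. -/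
def adicItv (N m k : ℕ) : Set ℝ :=
  Set.Ico ((k : ℝ) / (N : ℝ) ^ m) (((k : ℝ) + 1) / (N : ℝ) ^ m)

/-- The average `(1/μ(I)) ∫_I |φ| dμ` of `φ` over the `N`-adic interval at level `m`, index `k`
(its measure is `N^{-m}`). -/
noncomputable def adicAvg (N : ℕ) (φ : ℝ → ℝ) (m k : ℕ) : ℝ :=
  (N : ℝ) ^ m * ∫ y in adicItv N m k, |φ y|

/-- The `N`-adic maximal operator on `[0,1)`:
`M_N φ(x) = sup { (1/μ(I)) ∫_I |φ| dμ : x ∈ I, I an N-adic interval }`. -/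
noncomputable def adicMax (N : ℕ) (φ : ℝ → ℝ) (x : ℝ) : ℝ :=
  sSup {r : ℝ | ∃ m k : ℕ, k < N ^ m ∧ x ∈ adicItv N m k ∧ r = adicAvg N φ m k}

/-- The constant `K = (ρ ^ p - 1) / (ρ ^ p - ρ)` in front of `∫ φ ^ p - (∫ φ) ^ p`, where `ρ` is the
branching number of the tree. -/
noncomputable def bellmanConst (ρ p : ℝ) : ℝ := (ρ ^ p - 1) / (ρ ^ p - ρ)

section PowerInequalities

variable {ρ p a s : ℝ}

lemma rpow_sub_one_mul_self (ha : 0 ≤ a) (hp : p ≠ 0) : a ^ (p - 1) * a = a ^ p := by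
  rw [← Real.rpow_add_one' ha (by rwa [sub_add_cancel]), sub_add_cancel]

lemma bellmanConst_mul (hρ : 1 < ρ) (hp : 1 < p) :
    bellmanConst ρ p * (ρ ^ p - ρ) = ρ ^ p - 1 :=
  div_mul_cancel₀ _ (sub_pos.2 (Real.self_lt_rpow_of_one_lt hρ hp)).ne'

lemma one_le_bellmanConst (hρ : 1 < ρ) (hp : 1 < p) : 1 ≤ bellmanConst ρ p := by
  rw [bellmanConst, one_le_div (sub_pos.2 (Real.self_lt_rpow_of_one_lt hρ hp))]
  linarith

lemma rpow_le_chord (hp : 1 ≤ p) (hs : s ∈ Icc 1 ρ) :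
    (ρ - 1) * s ^ p ≤ (ρ - s) + (s - 1) * ρ ^ p := by
  rcases hs.1.eq_or_lt with rfl | h1
  · simp
  rcases hs.2.eq_or_lt with rfl | h2
  · simp
  have := (convexOn_rpow hp).secant_mono_aux1 (mem_Ici.2 zero_le_one)
    (mem_Ici.2 (by linarith)) h1 h2
  simpa only [Real.one_rpow, mul_one] using this

lemma rpow_sub_bellmanConst_mul_le_max (hρ : 1 < ρ) (hp : 1 < p) (ha : 0 ≤ a) (has : s ≤ ρ * a) :
    a ^ p - bellmanConst ρ p * (a ^ (p - 1) * s) ≤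
      max a s ^ p - bellmanConst ρ p * (max a s ^ (p - 1) * s) := by
  have hp0 : p ≠ 0 := by linarith
  rcases le_total s a with hsa | hsa
  · rw [max_eq_left hsa]
  rcases ha.eq_or_lt with rfl | ha
  · have : s = 0 := le_antisymm (by simpa using has) hsa
    simp [this]
  rw [max_eq_right hsa, rpow_sub_one_mul_self (ha.le.trans hsa) hp0]
  obtain ⟨t, rfl⟩ : ∃ t, s = t * a := ⟨s / a, (div_mul_cancel₀ s ha.ne').symm⟩
  have ht : t ∈ Icc 1 ρ :=
    ⟨le_of_mul_le_mul_right (by linarith) ha, le_of_mul_le_mul_right has ha⟩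
  have hchord : 1 - bellmanConst ρ p * t ≤ (1 - bellmanConst ρ p) * t ^ p := by
    refine le_of_mul_le_mul_right ?_ (sub_pos.2 (Real.self_lt_rpow_of_one_lt hρ hp))
    linear_combination rpow_le_chord hp.le ht + (t ^ p - t) * bellmanConst_mul hρ hp
  rw [mul_left_comm (a ^ (p - 1)), rpow_sub_one_mul_self ha.le hp0,
    Real.mul_rpow (zero_le_one.trans ht.1) ha.le]
  linear_combination a ^ p * hchord

lemma mul_rpow_sub_one_mul_le (hp : 1 < p) (ha : 0 ≤ a) (hs : 0 ≤ s) :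
    p * (a ^ (p - 1) * s) ≤ s ^ p + (p - 1) * a ^ p := by
  have hpq := Real.HolderConjugate.conjExponent hp
  have hyoung := Real.young_inequality_of_nonneg hs (Real.rpow_nonneg ha (p - 1)) hpq
  rw [← Real.rpow_mul ha, hpq.sub_one_mul_conj, Real.conjExponent] at hyoung
  have hp0 : p ≠ 0 := by linarith
  calc p * (a ^ (p - 1) * s) = p * (s * a ^ (p - 1)) := by ring
    _ ≤ p * (s ^ p / p + a ^ p / (p / (p - 1))) := by gcongr
    _ = s ^ p + (p - 1) * a ^ p := by field_simp

lemma max_rpow_sub_mul_le (hp : 1 < p) (ha : 0 ≤ a) (hs : 0 ≤ s) :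
    max a s ^ p - p / (p - 1) * (max a s ^ (p - 1) * s) ≤
      a ^ p - p / (p - 1) * (a ^ (p - 1) * s) := by
  rcases le_total s a with hsa | hsa
  · rw [max_eq_left hsa]
  have hp1 : 0 < p - 1 := by linarith
  rw [max_eq_right hsa, rpow_sub_one_mul_self hs (by linarith)]
  refine le_of_mul_le_mul_left ?_ hp1
  have hyoung := mul_rpow_sub_one_mul_le hp ha hs
  field_simp
  linarith

end PowerInequalities

lemma integrable_of_tendsto_of_integral_le {α : Type*} {m : MeasurableSpace α} {μ : Measure α}
    {g : ℕ → α → ℝ} {h : α → ℝ} {C : ℝ} (hg : ∀ n, Integrable (g n) μ)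
    (hg0 : ∀ n, 0 ≤ᵐ[μ] g n) (hgC : ∀ n, ∫ x, g n x ∂μ ≤ C)
    (hlim : ∀ᵐ x ∂μ, Tendsto (fun n ↦ g n x) atTop (nhds (h x))) : Integrable h μ := by
  refine ⟨aestronglyMeasurable_of_tendsto_ae _ (fun n ↦ (hg n).1) hlim, ?_⟩
  have hbound (n : ℕ) : ∫⁻ x, ‖g n x‖ₑ ∂μ ≤ ENNReal.ofReal C := by
    rw [← ofReal_integral_norm_eq_lintegral_enorm (hg n),
      integral_congr_ae ((hg0 n).mono fun x hx ↦ Real.norm_of_nonneg hx)]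
    exact ENNReal.ofReal_le_ofReal (hgC n)
  calc ∫⁻ x, ‖h x‖ₑ ∂μ = ∫⁻ x, liminf (fun n ↦ ‖g n x‖ₑ) atTop ∂μ :=
        lintegral_congr_ae (hlim.mono fun x hx ↦ hx.enorm.liminf_eq.symm)
    _ ≤ liminf (fun n ↦ ∫⁻ x, ‖g n x‖ₑ ∂μ) atTop :=
        lintegral_liminf_le' fun n ↦ (hg n).1.aemeasurable.enorm
    _ ≤ ENNReal.ofReal C := liminf_le_of_le (by isBoundedDefault) fun b hb ↦ by
        obtain ⟨n, hn⟩ := hb.exists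
        exact hn.trans (hbound n)
    _ < ⊤ := ENNReal.ofReal_lt_top

lemma integral_mul_condExp {Ω : Type*} {m m0 : MeasurableSpace Ω} {μ : Measure Ω} (hm : m ≤ m0)
    [SigmaFinite (μ.trim hm)] {g φ : Ω → ℝ} (hg : StronglyMeasurable[m] g)
    (hφ : Integrable φ μ) (hgφ : Integrable (g * φ) μ) :
    ∫ x, g x * (μ[φ | m]) x ∂μ = ∫ x, g x * φ x ∂μ :=
  calc ∫ x, g x * (μ[φ | m]) x ∂μ = ∫ x, (μ[g * φ | m]) x ∂μ :=
        integral_congr_ae (condExp_mul_of_stronglyMeasurable_left hg hgφ hφ).symm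
    _ = ∫ x, g x * φ x ∂μ := integral_condExp hm

section Lp

variable {α : Type*} {m : MeasurableSpace α} {μ : Measure α} {u v : α → ℝ} {p : ℝ}

lemma integrable_rpow_of_memLp (hp : 1 < p) (hu0 : 0 ≤ᵐ[μ] u) (hu : MemLp u (ENNReal.ofReal p) μ) :
    Integrable (fun x ↦ u x ^ p) μ := by
  have hp0 : 0 < p := zero_lt_one.trans hp
  have hint := hu.integrable_norm_rpow (ENNReal.ofReal_pos.2 hp0).ne' ENNReal.ofReal_ne_top
  rw [ENNReal.toReal_ofReal hp0.le] at hint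
  exact hint.congr (hu0.mono fun x hx ↦ by simp only [Real.norm_of_nonneg hx])

lemma integrable_rpow_sub_one_mul (hp : 1 < p) (hu0 : 0 ≤ᵐ[μ] u) (hv0 : 0 ≤ᵐ[μ] v)
    (hu : MemLp u (ENNReal.ofReal p) μ) (hv : MemLp v (ENNReal.ofReal p) μ) :
    Integrable (fun x ↦ u x ^ (p - 1) * v x) μ := by
  have hbound := (integrable_rpow_of_memLp hp hv0 hv).add
    ((integrable_rpow_of_memLp hp hu0 hu).const_mul (p - 1))
  refine hbound.mono' ((hu.1.aemeasurable.pow_const _).aestronglyMeasurable.mul hv.1) ?_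
  filter_upwards [hu0, hv0] with x hux hvx
  have huv : 0 ≤ u x ^ (p - 1) * v x := mul_nonneg (Real.rpow_nonneg hux _) hvx
  rw [Real.norm_of_nonneg huv]
  exact (le_mul_of_one_le_left huv hp.le).trans (mul_rpow_sub_one_mul_le hp hux hvx)

end Lp

section Doob

variable {Ω : Type*} {m0 : MeasurableSpace Ω} {μ : Measure Ω} {ℱ : Filtration ℕ m0}
  {φ : Ω → ℝ} {p c ρ : ℝ} {n : ℕ}

variable (μ ℱ φ) in
/-- Doob's maximal process `n ↦ max_{k ≤ n} μ[φ | ℱ k]` of the martingale generated by `φ`. -/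
noncomputable def doobMax : ℕ →o (Ω → ℝ) := partialSups fun k ↦ μ[φ | ℱ k]

variable (μ ℱ φ p c n) in
/-- The Bellman functional `∫ (M ^ p - c * M ^ (p - 1) * φ)` of the maximal process `M` at time `n`;
the two values `c = bellmanConst ρ p` and `c = p / (p - 1)` make it monotone in `n`. -/
noncomputable def bellmanFunctional : ℝ :=
  ∫ x, (doobMax μ ℱ φ n x ^ p - c * (doobMax μ ℱ φ n x ^ (p - 1) * φ x)) ∂μ

lemma doobMax_zero : doobMax μ ℱ φ 0 = μ[φ | ℱ 0] := partialSups_zero _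

lemma doobMax_succ : doobMax μ ℱ φ (n + 1) = doobMax μ ℱ φ n ⊔ μ[φ | ℱ (n + 1)] :=
  partialSups_add_one _ n

lemma condExp_le_doobMax : μ[φ | ℱ n] ≤ doobMax μ ℱ φ n :=
  le_partialSups (fun k ↦ μ[φ | ℱ k]) n

lemma stronglyMeasurable_doobMax : StronglyMeasurable[ℱ n] (doobMax μ ℱ φ n) := by
  induction n with
  | zero =>
    rw [doobMax_zero]
    exact stronglyMeasurable_condExp
  | succ n ih =>
    rw [doobMax_succ]
    exact @StronglyMeasurable.sup _ _ _ _ (ℱ (n + 1)) _ _ _ (ih.mono (ℱ.mono n.le_succ))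
      stronglyMeasurable_condExp

lemma doobMax_nonneg (hφ0 : 0 ≤ᵐ[μ] φ) : 0 ≤ᵐ[μ] doobMax μ ℱ φ n :=
  (condExp_nonneg hφ0).trans (ae_of_all μ condExp_le_doobMax)

lemma memLp_doobMax {q : ENNReal} (hq : 1 ≤ q) (hφ : MemLp φ q μ) :
    MemLp (doobMax μ ℱ φ n) q μ := by
  induction n with
  | zero => exact doobMax_zero (μ := μ) ▸ hφ.condExp hq
  | succ n ih => exact doobMax_succ (μ := μ) ▸ ih.sup (hφ.condExp hq)

section Functional

variable (hp : 1 < p) (hφ0 : 0 ≤ᵐ[μ] φ) (hφ : MemLp φ (ENNReal.ofReal p) μ)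
include hp hφ0 hφ

lemma integrable_doobMax_rpow : Integrable (fun x ↦ doobMax μ ℱ φ n x ^ p) μ :=
  integrable_rpow_of_memLp hp (doobMax_nonneg hφ0)
    (memLp_doobMax (ENNReal.one_le_ofReal.2 hp.le) hφ)

lemma integrable_doobMax_rpow_sub_one_mul {v : Ω → ℝ} (hv0 : 0 ≤ᵐ[μ] v)
    (hv : MemLp v (ENNReal.ofReal p) μ) :
    Integrable (fun x ↦ doobMax μ ℱ φ n x ^ (p - 1) * v x) μ :=
  integrable_rpow_sub_one_mul hp (doobMax_nonneg hφ0) hv0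
    (memLp_doobMax (ENNReal.one_le_ofReal.2 hp.le) hφ) hv

lemma integrable_bellmanFunctional_integrand {v : Ω → ℝ} (hv0 : 0 ≤ᵐ[μ] v)
    (hv : MemLp v (ENNReal.ofReal p) μ) :
    Integrable (fun x ↦ doobMax μ ℱ φ n x ^ p - c * (doobMax μ ℱ φ n x ^ (p - 1) * v x)) μ :=
  (integrable_doobMax_rpow hp hφ0 hφ).sub
    ((integrable_doobMax_rpow_sub_one_mul hp hφ0 hφ hv0 hv).const_mul c)

lemma bellmanFunctional_eq_sub : bellmanFunctional μ ℱ φ p c n =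
    (∫ x, doobMax μ ℱ φ n x ^ p ∂μ) - c * ∫ x, doobMax μ ℱ φ n x ^ (p - 1) * φ x ∂μ := by
  rw [bellmanFunctional, integral_sub (integrable_doobMax_rpow hp hφ0 hφ)
    ((integrable_doobMax_rpow_sub_one_mul hp hφ0 hφ hφ0 hφ).const_mul c), integral_const_mul]

variable [IsFiniteMeasure μ]

lemma integral_doobMax_rpow_sub_one_mul_condExp {k : ℕ} (hnk : n ≤ k) :
    ∫ x, doobMax μ ℱ φ n x ^ (p - 1) * (μ[φ | ℱ k]) x ∂μ =
      ∫ x, doobMax μ ℱ φ n x ^ (p - 1) * φ x ∂μ := by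
  refine integral_mul_condExp (ℱ.le k) (g := fun x ↦ doobMax μ ℱ φ n x ^ (p - 1)) ?_
    (hφ.integrable (ENNReal.one_le_ofReal.2 hp.le))
    (integrable_doobMax_rpow_sub_one_mul hp hφ0 hφ hφ0 hφ)
  exact ((stronglyMeasurable_doobMax.mono (ℱ.mono hnk)).measurable.pow_const _).stronglyMeasurable

lemma bellmanFunctional_eq_integral_condExp {k : ℕ} (hnk : n ≤ k) :
    bellmanFunctional μ ℱ φ p c n = ∫ x, (doobMax μ ℱ φ n x ^ p -
      c * (doobMax μ ℱ φ n x ^ (p - 1) * (μ[φ | ℱ k]) x)) ∂μ := by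
  rw [bellmanFunctional_eq_sub hp hφ0 hφ,
    ← integral_doobMax_rpow_sub_one_mul_condExp hp hφ0 hφ hnk, ← integral_const_mul,
    integral_sub (integrable_doobMax_rpow hp hφ0 hφ)]
  exact (integrable_doobMax_rpow_sub_one_mul hp hφ0 hφ (condExp_nonneg hφ0)
    (hφ.condExp (ENNReal.one_le_ofReal.2 hp.le))).const_mul c

lemma bellmanFunctional_le_succ (hρ : 1 < ρ)
    (hreg : μ[φ | ℱ (n + 1)] ≤ᵐ[μ] ρ • μ[φ | ℱ n]) :
    bellmanFunctional μ ℱ φ p (bellmanConst ρ p) n ≤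
      bellmanFunctional μ ℱ φ p (bellmanConst ρ p) (n + 1) := by
  have hS0 : 0 ≤ᵐ[μ] μ[φ | ℱ (n + 1)] := condExp_nonneg hφ0
  have hS : MemLp (μ[φ | ℱ (n + 1)]) (ENNReal.ofReal p) μ :=
    hφ.condExp (ENNReal.one_le_ofReal.2 hp.le)
  rw [bellmanFunctional_eq_integral_condExp hp hφ0 hφ n.le_succ,
    bellmanFunctional_eq_integral_condExp hp hφ0 hφ le_rfl]
  refine integral_mono_ae (integrable_bellmanFunctional_integrand hp hφ0 hφ hS0 hS)
    (integrable_bellmanFunctional_integrand hp hφ0 hφ hS0 hS) ?_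
  filter_upwards [hreg, doobMax_nonneg (ℱ := ℱ) (n := n) hφ0] with x hregx hMx
  rw [doobMax_succ]
  refine rpow_sub_bellmanConst_mul_le_max hρ hp hMx (hregx.trans ?_)
  exact mul_le_mul_of_nonneg_left (condExp_le_doobMax x) (zero_le_one.trans hρ.le)

lemma bellmanFunctional_succ_le :
    bellmanFunctional μ ℱ φ p (p / (p - 1)) (n + 1) ≤
      bellmanFunctional μ ℱ φ p (p / (p - 1)) n := by
  have hS0 : 0 ≤ᵐ[μ] μ[φ | ℱ (n + 1)] := condExp_nonneg hφ0
  have hS : MemLp (μ[φ | ℱ (n + 1)]) (ENNReal.ofReal p) μ :=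
    hφ.condExp (ENNReal.one_le_ofReal.2 hp.le)
  rw [bellmanFunctional_eq_integral_condExp hp hφ0 hφ n.le_succ,
    bellmanFunctional_eq_integral_condExp hp hφ0 hφ le_rfl]
  refine integral_mono_ae (integrable_bellmanFunctional_integrand hp hφ0 hφ hS0 hS)
    (integrable_bellmanFunctional_integrand hp hφ0 hφ hS0 hS) ?_
  filter_upwards [hS0, doobMax_nonneg (ℱ := ℱ) (n := n) hφ0] with x hSx hMx
  rw [doobMax_succ]
  exact max_rpow_sub_mul_le hp hMx hSx

lemma bellmanFunctional_zero : bellmanFunctional μ ℱ φ p c 0 =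
    (1 - c) * ∫ x, (μ[φ | ℱ 0]) x ^ p ∂μ := by
  have hself : ∫ x, doobMax μ ℱ φ 0 x ^ (p - 1) * (μ[φ | ℱ 0]) x ∂μ =
      ∫ x, (μ[φ | ℱ 0]) x ^ p ∂μ := by
    refine integral_congr_ae ?_
    filter_upwards [condExp_nonneg (m := ℱ 0) hφ0] with x hx
    rw [doobMax_zero, rpow_sub_one_mul_self hx (zero_lt_one.trans hp).ne']
  rw [bellmanFunctional_eq_sub hp hφ0 hφ,
    ← integral_doobMax_rpow_sub_one_mul_condExp hp hφ0 hφ le_rfl, hself, doobMax_zero]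
  ring

theorem integral_doobMax_rpow_le :
    ∫ x, doobMax μ ℱ φ n x ^ p ∂μ ≤ (p / (p - 1)) ^ p * ∫ x, φ x ^ p ∂μ := by
  have hp1 : 0 < p - 1 := sub_pos.2 hp
  set c := p / (p - 1) with hc
  have hc1 : 1 ≤ c := by rw [hc, one_le_div hp1]; linarith
  have hdecay : bellmanFunctional μ ℱ φ p c n ≤ 0 := calc
    bellmanFunctional μ ℱ φ p c n ≤ bellmanFunctional μ ℱ φ p c 0 :=
      antitone_nat_of_succ_le (fun n ↦ bellmanFunctional_succ_le hp hφ0 hφ) n.zero_le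
    _ = (1 - c) * ∫ x, (μ[φ | ℱ 0]) x ^ p ∂μ := bellmanFunctional_zero hp hφ0 hφ
    _ ≤ 0 := mul_nonpos_of_nonpos_of_nonneg (sub_nonpos.2 hc1) (integral_nonneg_of_ae <|
        (condExp_nonneg hφ0).mono fun x hx ↦ Real.rpow_nonneg hx p)
  have hyoung : p * (c * ∫ x, doobMax μ ℱ φ n x ^ (p - 1) * φ x ∂μ) ≤
      c ^ p * (∫ x, φ x ^ p ∂μ) + (p - 1) * ∫ x, doobMax μ ℱ φ n x ^ p ∂μ := by
    simp only [← integral_const_mul]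
    have hM := (integrable_doobMax_rpow (ℱ := ℱ) (n := n) hp hφ0 hφ).const_mul (p - 1)
    have hφc := (integrable_rpow_of_memLp hp hφ0 hφ).const_mul (c ^ p)
    rw [← integral_add hφc hM]
    refine integral_mono_ae (((integrable_doobMax_rpow_sub_one_mul hp hφ0 hφ hφ0 hφ).const_mul
      c).const_mul p) (hφc.add hM) ?_
    filter_upwards [hφ0, doobMax_nonneg (ℱ := ℱ) (n := n) hφ0] with x hφx hMx
    have := mul_rpow_sub_one_mul_le hp hMx (mul_nonneg (zero_le_one.trans hc1) hφx)
    rwa [mul_left_comm _ c, Real.mul_rpow (zero_le_one.trans hc1) hφx] at this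
  rw [bellmanFunctional_eq_sub hp hφ0 hφ] at hdecay
  have := mul_nonpos_of_nonneg_of_nonpos (zero_lt_one.trans hp).le hdecay
  linarith

end Functional

lemma tendsto_doobMax (x : Ω) (hbdd : BddAbove (range fun n ↦ (μ[φ | ℱ n]) x)) :
    Tendsto (fun n ↦ doobMax μ ℱ φ n x) atTop (nhds (⨆ n, (μ[φ | ℱ n]) x)) := by
  have hx : (fun n ↦ doobMax μ ℱ φ n x) = partialSups fun n ↦ (μ[φ | ℱ n]) x :=
    funext fun n ↦ Pi.partialSups_apply _ n x
  rw [hx, ← ciSup_partialSups_eq hbdd]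
  exact tendsto_atTop_ciSup (partialSups _).monotone (bddAbove_range_partialSups.2 hbdd)

section Limit

variable [IsFiniteMeasure μ] (hmeas : AEStronglyMeasurable[⨆ n, ℱ n] φ μ)
include hmeas

lemma ae_tendsto_condExp_of_aestronglyMeasurable (hφ : Integrable φ μ) :
    ∀ᵐ x ∂μ, Tendsto (fun n ↦ (μ[φ | ℱ n]) x) atTop (nhds (φ x)) := by
  filter_upwards [tendsto_ae_condExp (μ := μ) (ℱ := ℱ) φ,
    condExp_of_aestronglyMeasurable' (iSup_le ℱ.le) hmeas hφ] with x hx hφx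
  rwa [hφx] at hx

lemma ae_tendsto_doobMax (hφ : Integrable φ μ) :
    ∀ᵐ x ∂μ, Tendsto (fun n ↦ doobMax μ ℱ φ n x) atTop (nhds (⨆ n, (μ[φ | ℱ n]) x)) :=
  (ae_tendsto_condExp_of_aestronglyMeasurable hmeas hφ).mono fun x hx ↦
    tendsto_doobMax x hx.bddAbove_range

lemma ae_le_iSup_condExp (hφ : Integrable φ μ) : φ ≤ᵐ[μ] fun x ↦ ⨆ n, (μ[φ | ℱ n]) x :=
  (ae_tendsto_condExp_of_aestronglyMeasurable hmeas hφ).mono fun _ hx ↦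
    le_of_tendsto' hx fun n ↦ le_ciSup hx.bddAbove_range n

lemma ae_doobMax_le_iSup_condExp (hφ : Integrable φ μ) :
    doobMax μ ℱ φ n ≤ᵐ[μ] fun x ↦ ⨆ n, (μ[φ | ℱ n]) x :=
  (ae_tendsto_doobMax hmeas hφ).mono fun x hx ↦
    Monotone.ge_of_tendsto (fun _ _ hij ↦ (doobMax μ ℱ φ).monotone hij x) hx n

variable (hp : 1 < p) (hφ0 : 0 ≤ᵐ[μ] φ) (hφ : MemLp φ (ENNReal.ofReal p) μ)
include hp hφ0 hφ

lemma iSup_condExp_nonneg : 0 ≤ᵐ[μ] fun x ↦ ⨆ n, (μ[φ | ℱ n]) x :=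
  hφ0.trans (ae_le_iSup_condExp hmeas (hφ.integrable (ENNReal.one_le_ofReal.2 hp.le)))

lemma memLp_iSup_condExp : MemLp (fun x ↦ ⨆ n, (μ[φ | ℱ n]) x) (ENNReal.ofReal p) μ := by
  have hp0 : 0 < p := zero_lt_one.trans hp
  have hlim := ae_tendsto_doobMax hmeas (hφ.integrable (ENNReal.one_le_ofReal.2 hp.le))
  rw [← integrable_norm_rpow_iff (aestronglyMeasurable_of_tendsto_ae _
    (fun n ↦ (memLp_doobMax (ENNReal.one_le_ofReal.2 hp.le) hφ).1) hlim)
    (ENNReal.ofReal_pos.2 hp0).ne' ENNReal.ofReal_ne_top, ENNReal.toReal_ofReal hp0.le]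
  refine integrable_of_tendsto_of_integral_le (fun n ↦ integrable_doobMax_rpow hp hφ0 hφ)
    (fun n ↦ (doobMax_nonneg hφ0).mono fun x hx ↦ Real.rpow_nonneg hx p)
    (fun n ↦ integral_doobMax_rpow_le (ℱ := ℱ) (n := n) hp hφ0 hφ) ?_
  filter_upwards [hlim, iSup_condExp_nonneg hmeas hp hφ0 hφ] with x hx hx0
  rw [Real.norm_of_nonneg hx0]
  exact hx.rpow_const (Or.inr hp0.le)

lemma tendsto_integral_doobMax_rpow_sub_one_mul :
    Tendsto (fun n ↦ ∫ x, doobMax μ ℱ φ n x ^ (p - 1) * φ x ∂μ) atTop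
      (nhds (∫ x, (⨆ n, (μ[φ | ℱ n]) x) ^ (p - 1) * φ x ∂μ)) := by
  have hp1 : 0 ≤ p - 1 := (sub_pos.2 hp).le
  have hφ1 : Integrable φ μ := hφ.integrable (ENNReal.one_le_ofReal.2 hp.le)
  refine tendsto_integral_of_dominated_convergence _
    (fun n ↦ (integrable_doobMax_rpow_sub_one_mul hp hφ0 hφ hφ0 hφ).1)
    (integrable_rpow_sub_one_mul hp (iSup_condExp_nonneg hmeas hp hφ0 hφ) hφ0
      (memLp_iSup_condExp hmeas hp hφ0 hφ) hφ) (fun n ↦ ?_) ?_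
  · filter_upwards [hφ0, doobMax_nonneg (ℱ := ℱ) (n := n) hφ0,
      ae_doobMax_le_iSup_condExp (n := n) hmeas hφ1] with x hφx hM0 hM
    rw [Real.norm_of_nonneg (mul_nonneg (Real.rpow_nonneg hM0 _) hφx)]
    exact mul_le_mul_of_nonneg_right (Real.rpow_le_rpow hM0 hM hp1) hφx
  · filter_upwards [ae_tendsto_doobMax hmeas hφ1] with x hx
    exact (hx.rpow_const (Or.inr hp1)).mul_const _

lemma integral_rpow_le_integral_iSup_condExp_rpow_sub_one_mul :
    ∫ x, φ x ^ p ∂μ ≤ ∫ x, (⨆ n, (μ[φ | ℱ n]) x) ^ (p - 1) * φ x ∂μ := by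
  refine integral_mono_ae (integrable_rpow_of_memLp hp hφ0 hφ)
    (integrable_rpow_sub_one_mul hp (iSup_condExp_nonneg hmeas hp hφ0 hφ) hφ0
      (memLp_iSup_condExp hmeas hp hφ0 hφ) hφ) ?_
  filter_upwards [hφ0, ae_le_iSup_condExp hmeas (hφ.integrable (ENNReal.one_le_ofReal.2 hp.le))]
    with x hφx hx
  rw [← rpow_sub_one_mul_self hφx (zero_lt_one.trans hp).ne']
  exact mul_le_mul_of_nonneg_right (Real.rpow_le_rpow hφx hx (sub_pos.2 hp).le) hφx

lemma integral_doobMax_rpow_le_integral_iSup_condExp_rpow :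
    ∫ x, doobMax μ ℱ φ n x ^ p ∂μ ≤ ∫ x, (⨆ n, (μ[φ | ℱ n]) x) ^ p ∂μ := by
  refine integral_mono_ae (integrable_doobMax_rpow hp hφ0 hφ) (integrable_rpow_of_memLp hp
    (iSup_condExp_nonneg hmeas hp hφ0 hφ) (memLp_iSup_condExp hmeas hp hφ0 hφ)) ?_
  filter_upwards [doobMax_nonneg (ℱ := ℱ) (n := n) hφ0, ae_doobMax_le_iSup_condExp (n := n) hmeas
    (hφ.integrable (ENNReal.one_le_ofReal.2 hp.le))] with x hM0 hM
  exact Real.rpow_le_rpow hM0 hM (zero_lt_one.trans hp).le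

theorem le_integral_iSup_condExp_rpow (hρ : 1 < ρ)
    (hreg : ∀ n, μ[φ | ℱ (n + 1)] ≤ᵐ[μ] ρ • μ[φ | ℱ n]) :
    (∫ x, (μ[φ | ℱ 0]) x ^ p ∂μ) +
        bellmanConst ρ p * ((∫ x, φ x ^ p ∂μ) - ∫ x, (μ[φ | ℱ 0]) x ^ p ∂μ) ≤
      ∫ x, (⨆ n, (μ[φ | ℱ n]) x) ^ p ∂μ := by
  set K := bellmanConst ρ p
  have hK0 : 0 ≤ K := zero_le_one.trans (one_le_bellmanConst hρ hp)
  have hstage (n : ℕ) : (1 - K) * (∫ x, (μ[φ | ℱ 0]) x ^ p ∂μ) +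
      K * ∫ x, doobMax μ ℱ φ n x ^ (p - 1) * φ x ∂μ ≤ ∫ x, (⨆ n, (μ[φ | ℱ n]) x) ^ p ∂μ := by
    have hmono := monotone_nat_of_le_succ (f := bellmanFunctional μ ℱ φ p K)
      (fun n ↦ bellmanFunctional_le_succ hp hφ0 hφ hρ (hreg n)) n.zero_le
    rw [bellmanFunctional_zero hp hφ0 hφ, bellmanFunctional_eq_sub hp hφ0 hφ] at hmono
    linarith [integral_doobMax_rpow_le_integral_iSup_condExp_rpow (n := n) hmeas hp hφ0 hφ]
  have hlimit := le_of_tendsto' (((tendsto_integral_doobMax_rpow_sub_one_mul hmeas hp hφ0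
    hφ).const_mul K).const_add _) hstage
  have hφM := mul_le_mul_of_nonneg_left
    (integral_rpow_le_integral_iSup_condExp_rpow_sub_one_mul hmeas hp hφ0 hφ) hK0
  linarith

end Limit

end Doob

lemma condExp_comap_ae_eq_setAverage {Ω ι : Type*} {m0 : MeasurableSpace Ω} {μ : Measure Ω}
    [IsFiniteMeasure μ] [Countable ι] [mι : MeasurableSpace ι] [MeasurableSingletonClass ι]
    {X : Ω → ι} (hX : Measurable X) {f : Ω → ℝ} (hf : Integrable f μ) :
    μ[f | mι.comap X] =ᵐ[μ] fun x ↦ ⨍ y in X ⁻¹' {X x}, f y ∂μ := by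
  obtain ⟨h, -, hh⟩ : ∃ h : ι → ℝ, StronglyMeasurable h ∧ μ[f | mι.comap X] = h ∘ X :=
    StronglyMeasurable.exists_eq_measurable_comp stronglyMeasurable_condExp
  have hfiber (i : ι) : μ.real (X ⁻¹' {i}) * h i = ∫ y in X ⁻¹' {i}, f y ∂μ := by
    rw [← setIntegral_condExp hX.comap_le hf ⟨{i}, measurableSet_singleton i, rfl⟩, hh,
      setIntegral_congr_fun (f := h ∘ X) (g := fun _ ↦ h i) (hX (measurableSet_singleton i))
        fun y hy ↦ congrArg h hy, setIntegral_const, smul_eq_mul]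
  have hnull : ∀ᵐ x ∂μ, ∀ i, μ (X ⁻¹' {i}) = 0 → X x ≠ i := by
    refine ae_all_iff.2 fun i ↦ ?_
    by_cases hi : μ (X ⁻¹' {i}) = 0
    · filter_upwards [measure_eq_zero_iff_ae_notMem.1 hi] with x hx _ using hx
    · exact ae_of_all μ fun x h0 ↦ absurd h0 hi
  filter_upwards [hnull] with x hx
  have hpos : μ.real (X ⁻¹' {X x}) ≠ 0 := fun h0 ↦ hx _ ((measureReal_eq_zero_iff).1 h0) rfl
  rw [setAverage_eq, ← hfiber, smul_eq_mul, inv_mul_cancel_left₀ hpos, hh, Function.comp_apply]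

section Adic

variable {N m k : ℕ} {x : ℝ} {φ : ℝ → ℝ}

/-- The index of the level-`m` `N`-adic interval containing `x`, for `0 ≤ x`. -/
noncomputable def adicIdx (N m : ℕ) (x : ℝ) : ℕ := ⌊x * (N : ℝ) ^ m⌋₊

/-- The average of `|φ|` over the level-`m` `N`-adic interval containing `x`. -/
noncomputable def adicAvgAt (N : ℕ) (φ : ℝ → ℝ) (m : ℕ) (x : ℝ) : ℝ :=
  adicAvg N φ m (adicIdx N m x)

lemma measurable_adicIdx : Measurable (adicIdx N m) :=
  Nat.measurable_floor.comp (measurable_id.mul_const _)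

lemma adicIdx_succ_div (hN : 0 < N) : adicIdx N (m + 1) x / N = adicIdx N m x := by
  have hN' : (N : ℝ) ≠ 0 := Nat.cast_ne_zero.2 hN.ne'
  rw [adicIdx, ← Nat.floor_div_natCast, pow_succ, ← mul_assoc, mul_div_cancel_right₀ _ hN', adicIdx]

/-- The filtration of `ℝ` whose level `m` is generated by the index of the `N`-adic interval. -/
noncomputable def adicFiltration (hN : 0 < N) : Filtration ℕ (borel ℝ) where
  seq m := MeasurableSpace.comap (adicIdx N m) ⊤
  mono' := monotone_nat_of_le_succ fun m ↦ by
    have hdiv : adicIdx N m = (· / N) ∘ adicIdx N (m + 1) :=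
      funext fun x ↦ (adicIdx_succ_div hN).symm
    rw [hdiv, ← MeasurableSpace.comap_comp]
    exact MeasurableSpace.comap_mono le_top
  le' m := measurable_adicIdx.comap_le

lemma mem_adicItv_iff (hN : 0 < N) (hx : 0 ≤ x) : x ∈ adicItv N m k ↔ adicIdx N m x = k := by
  have hNm : (0 : ℝ) < (N : ℝ) ^ m := pow_pos (Nat.cast_pos.2 hN) m
  rw [adicIdx, Nat.floor_eq_iff (mul_nonneg hx hNm.le), adicItv, mem_Ico, div_le_iff₀ hNm,
    lt_div_iff₀ hNm]

lemma adicItv_nonneg (hx : x ∈ adicItv N m k) : 0 ≤ x :=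
  le_trans (by positivity) hx.1

lemma adicIdx_lt (hN : 0 < N) (hx : x ∈ Ico (0 : ℝ) 1) : adicIdx N m x < N ^ m := by
  have hNm : (0 : ℝ) < (N : ℝ) ^ m := pow_pos (Nat.cast_pos.2 hN) m
  rw [adicIdx, Nat.floor_lt (mul_nonneg hx.1 hNm.le), Nat.cast_pow]
  exact mul_lt_of_lt_one_left hNm hx.2

lemma adicItv_subset_Ico (hN : 0 < N) (hk : k < N ^ m) : adicItv N m k ⊆ Ico 0 1 := by
  have hNm : (0 : ℝ) < (N : ℝ) ^ m := pow_pos (Nat.cast_pos.2 hN) m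
  refine Ico_subset_Ico (by positivity) ((div_le_one hNm).2 ?_)
  exact_mod_cast hk

lemma adicItv_succ_subset (hN : 0 < N) : adicItv N (m + 1) k ⊆ adicItv N m (k / N) := fun y hy ↦ by
  rw [mem_adicItv_iff hN (adicItv_nonneg hy), ← adicIdx_succ_div hN,
    (mem_adicItv_iff hN (adicItv_nonneg hy)).1 hy]

lemma volume_real_adicItv (hN : 0 < N) : volume.real (adicItv N m k) = ((N : ℝ) ^ m)⁻¹ := by
  have : (0 : ℝ) < (N : ℝ) ^ m := pow_pos (Nat.cast_pos.2 hN) m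
  rw [adicItv, Real.volume_real_Ico_of_le (by gcongr; linarith)]
  ring

lemma adicMax_eq_iSup (hN : 0 < N) (hx : x ∈ Ico (0 : ℝ) 1) :
    adicMax N φ x = ⨆ m, adicAvgAt N φ m x := by
  refine congrArg sSup (ext fun r ↦ ⟨?_, ?_⟩)
  · rintro ⟨m, k, -, hxk, rfl⟩
    exact ⟨m, congrArg (adicAvg N φ m) ((mem_adicItv_iff hN hx.1).1 hxk)⟩
  · rintro ⟨m, rfl⟩
    exact ⟨m, _, adicIdx_lt hN hx, (mem_adicItv_iff hN hx.1).2 rfl, rfl⟩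

lemma adicAvgAt_succ_le (hN : 0 < N) (hφ : IntegrableOn φ (Ico 0 1)) (hx : x ∈ Ico (0 : ℝ) 1) :
    adicAvgAt N φ (m + 1) x ≤ N * adicAvgAt N φ m x := by
  rw [adicAvgAt, adicAvgAt, adicAvg, adicAvg, pow_succ', mul_assoc, ← adicIdx_succ_div hN (m := m)]
  gcongr ?_ * (?_ * ?_)
  refine setIntegral_mono_set ?_ (ae_of_all _ fun y ↦ abs_nonneg _)
    (adicItv_succ_subset hN).eventuallyLE
  rw [adicIdx_succ_div hN]
  exact (hφ.mono_set (adicItv_subset_Ico hN (adicIdx_lt hN hx))).abs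

lemma adicAvgAt_zero (hx : x ∈ Ico (0 : ℝ) 1) :
    adicAvgAt N φ 0 x = ∫ y in Ico (0 : ℝ) 1, |φ y| := by
  have hidx : adicIdx N 0 x = 0 := by
    simp only [adicIdx, pow_zero, mul_one, Nat.floor_eq_zero, hx.2]
  simp only [adicAvgAt, adicAvg, adicItv, hidx, pow_zero, Nat.cast_zero, zero_add, div_one, one_mul]

lemma condExp_adicFiltration_ae_eq (hN : 0 < N) (hφ : IntegrableOn φ (Ico 0 1)) :
    (volume.restrict (Ico (0 : ℝ) 1))[fun y ↦ |φ y| | adicFiltration hN m]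
      =ᵐ[volume.restrict (Ico (0 : ℝ) 1)] adicAvgAt N φ m := by
  refine (condExp_comap_ae_eq_setAverage measurable_adicIdx hφ.abs).trans ?_
  filter_upwards [ae_restrict_mem measurableSet_Ico] with x hx
  have hfiber : adicIdx N m ⁻¹' {adicIdx N m x} ∩ Ico 0 1 = adicItv N m (adicIdx N m x) := by
    ext y
    refine ⟨fun hy ↦ (mem_adicItv_iff hN hy.2.1).2 hy.1, fun hy ↦ ⟨?_, ?_⟩⟩
    · exact (mem_adicItv_iff hN (adicItv_nonneg hy)).1 hy
    · exact adicItv_subset_Ico hN (adicIdx_lt hN hx) hy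
  have hmeas : MeasurableSet (adicIdx N m ⁻¹' {adicIdx N m x}) :=
    measurable_adicIdx (measurableSet_singleton _)
  rw [setAverage_eq, measureReal_restrict_apply hmeas, Measure.restrict_restrict hmeas, hfiber,
    volume_real_adicItv hN, inv_inv, smul_eq_mul, adicAvgAt, adicAvg]

lemma integral_condExp_adicFiltration_zero_rpow {p : ℝ} (hN : 0 < N)
    (hφ : IntegrableOn φ (Ico 0 1)) :
    ∫ x in Ico (0 : ℝ) 1, (volume.restrict (Ico (0 : ℝ) 1))[fun y ↦ |φ y| |
      adicFiltration hN 0] x ^ p = (∫ y in Ico (0 : ℝ) 1, |φ y|) ^ p := by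
  calc _ = ∫ _ in Ico (0 : ℝ) 1, (∫ y in Ico (0 : ℝ) 1, |φ y|) ^ p := by
        refine integral_congr_ae ?_
        filter_upwards [condExp_adicFiltration_ae_eq (m := 0) hN hφ,
          ae_restrict_mem measurableSet_Ico] with x hx hx01
        rw [hx, adicAvgAt_zero hx01]
    _ = _ := by simp

lemma integral_iSup_condExp_adicFiltration_rpow {p : ℝ} (hN : 0 < N)
    (hφ : IntegrableOn φ (Ico 0 1)) :
    ∫ x in Ico (0 : ℝ) 1, (⨆ n, (volume.restrict (Ico (0 : ℝ) 1))[fun y ↦ |φ y| |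
      adicFiltration hN n] x) ^ p = ∫ x in Ico (0 : ℝ) 1, adicMax N φ x ^ p := by
  refine integral_congr_ae ?_
  filter_upwards [ae_all_iff.2 fun n ↦ condExp_adicFiltration_ae_eq (m := n) hN hφ,
    ae_restrict_mem measurableSet_Ico] with x hx hx01
  simp only [hx, adicMax_eq_iSup hN hx01]

lemma aestronglyMeasurable_iSup_adicFiltration (hN : 1 < N) (hφ : Measurable φ) :
    AEStronglyMeasurable[⨆ n, adicFiltration (zero_lt_one.trans hN) n] φ
      (volume.restrict (Ico (0 : ℝ) 1)) := by
  set ℱ := adicFiltration (zero_lt_one.trans hN)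
  have hidx (n : ℕ) : Measurable[⨆ n, ℱ n] fun x ↦ (adicIdx N n x : ℝ) / (N : ℝ) ^ n :=
    (measurable_from_top (f := fun k : ℕ ↦ (k : ℝ) / (N : ℝ) ^ n)).comp
      ((comap_measurable (adicIdx N n)).mono (le_iSup (fun n ↦ ℱ n) n) le_rfl)
  have hmax : Measurable[⨆ n, ℱ n] fun x : ℝ ↦ max 0 x := by
    refine @measurable_of_tendsto_metrizable _ _ (⨆ n, ℱ n) _ _ _ _ _ _ hidx
      (tendsto_pi_nhds.2 fun x ↦ ?_)
    have hfloor (n : ℕ) : adicIdx N n x = ⌊max 0 x * (N : ℝ) ^ n⌋₊ := by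
      rcases le_total 0 x with hx | hx
      · rw [max_eq_right hx, adicIdx]
      · rw [max_eq_left hx, zero_mul, Nat.floor_zero, adicIdx,
          Nat.floor_of_nonpos (mul_nonpos_of_nonpos_of_nonneg hx (by positivity))]
    simp only [hfloor]
    exact (tendsto_nat_floor_mul_div_atTop (le_max_left 0 x)).comp
      (tendsto_pow_atTop_atTop_of_one_lt (Nat.one_lt_cast.2 hN))
  refine ⟨fun x ↦ φ (max 0 x), (hφ.comp hmax).stronglyMeasurable, ?_⟩
  filter_upwards [ae_restrict_mem measurableSet_Ico] with x hx
  rw [max_eq_right hx.1]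

lemma le_integral_adicMax_rpow {p : ℝ} (hN : 1 < N) (hp : 1 < p) (hφm : Measurable φ)
    (hφ0 : ∀ y ∈ Ico (0 : ℝ) 1, 0 ≤ φ y) (hφ : IntegrableOn φ (Ico 0 1))
    (hφp : IntegrableOn (fun y ↦ φ y ^ p) (Ico 0 1)) :
    (∫ y in Ico (0 : ℝ) 1, φ y) ^ p + bellmanConst N p *
        ((∫ y in Ico (0 : ℝ) 1, φ y ^ p) - (∫ y in Ico (0 : ℝ) 1, φ y) ^ p) ≤
      ∫ y in Ico (0 : ℝ) 1, adicMax N φ y ^ p := by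
  have hN0 : 0 < N := zero_lt_one.trans hN
  have hp0 : 0 < p := zero_lt_one.trans hp
  have hunit : ∀ᵐ y ∂volume.restrict (Ico (0 : ℝ) 1), y ∈ Ico (0 : ℝ) 1 :=
    ae_restrict_mem measurableSet_Ico
  have habs : ∀ y ∈ Ico (0 : ℝ) 1, |φ y| = φ y := fun y hy ↦ abs_of_nonneg (hφ0 y hy)
  have hcond (n : ℕ) := condExp_adicFiltration_ae_eq (m := n) hN0 hφ
  have hLp : MemLp (fun y ↦ |φ y|) (ENNReal.ofReal p) (volume.restrict (Ico 0 1)) := by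
    rw [← integrable_norm_rpow_iff hφ.abs.1 (ENNReal.ofReal_pos.2 hp0).ne' ENNReal.ofReal_ne_top,
      ENNReal.toReal_ofReal hp0.le]
    refine hφp.congr (hunit.mono fun y hy ↦ ?_)
    simp only [Real.norm_eq_abs, habs y hy]
  have hbound := le_integral_iSup_condExp_rpow
    (aestronglyMeasurable_iSup_adicFiltration hN hφm.abs) hp (ae_of_all _ fun y ↦ abs_nonneg (φ y))
    hLp (Nat.one_lt_cast.2 hN) fun n ↦ by
      filter_upwards [hcond n, hcond (n + 1), hunit] with y hn hn1 hy
      rw [hn1, Pi.smul_apply, hn, smul_eq_mul]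
      exact adicAvgAt_succ_le hN0 hφ hy
  have hpow : ∫ y in Ico (0 : ℝ) 1, |φ y| ^ p = ∫ y in Ico (0 : ℝ) 1, φ y ^ p :=
    setIntegral_congr_fun measurableSet_Ico fun y hy ↦ by simp only [habs y hy]
  have hmean : ∫ y in Ico (0 : ℝ) 1, |φ y| = ∫ y in Ico (0 : ℝ) 1, φ y :=
    setIntegral_congr_fun measurableSet_Ico habs
  rwa [integral_condExp_adicFiltration_zero_rpow hN0 hφ,
    integral_iSup_condExp_adicFiltration_rpow hN0 hφ, hmean, hpow] at hbound

end Adic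

section Shells

variable {b y : ℝ} {i m : ℕ} {c u : ℕ → ℝ}

/-- The index `i` of the shell `[(b ^ (i + 1))⁻¹, (b ^ i)⁻¹)` containing `y`, for `0 < y < 1`. -/
noncomputable def shellIdx (b y : ℝ) : ℕ := ⌈-Real.logb b y⌉₊ - 1

lemma measurable_comp_shellIdx : Measurable (c ∘ shellIdx b) :=
  measurable_from_top.comp <| measurable_from_top (f := fun n : ℕ ↦ n - 1) |>.comp <|
    Nat.measurable_ceil.comp ((Real.measurable_log.div_const _).neg)

lemma shellIdx_le_iff (hb : 1 < b) (hy : 0 < y) : shellIdx b y ≤ i ↔ (b ^ (i + 1))⁻¹ ≤ y := by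
  rw [shellIdx, tsub_le_iff_right, Nat.ceil_le, neg_le, Real.le_logb_iff_rpow_le hb hy,
    Real.rpow_neg (zero_le_one.trans hb.le), Real.rpow_natCast]

lemma le_shellIdx_iff (hb : 1 < b) (hy : y ∈ Ioo (0 : ℝ) 1) : i ≤ shellIdx b y ↔ y < (b ^ i)⁻¹ := by
  cases i with
  | zero => simp [hy.2]
  | succ i => rw [Nat.succ_le_iff, ← not_le, shellIdx_le_iff hb hy.1, not_le]

lemma shellIdx_eq_iff (hb : 1 < b) (hy : y ∈ Ioo (0 : ℝ) 1) :
    shellIdx b y = i ↔ y ∈ Ico (b ^ (i + 1))⁻¹ (b ^ i)⁻¹ := by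
  rw [le_antisymm_iff, shellIdx_le_iff hb hy.1, le_shellIdx_iff hb hy, mem_Ico]

lemma Ico_inv_pow_subset (hb : 1 < b) : Ico (b ^ (i + 1))⁻¹ (b ^ i)⁻¹ ⊆ Ioo 0 1 := fun _ hy ↦
  ⟨(inv_pos.2 (pow_pos (zero_lt_one.trans hb) _)).trans_le hy.1,
    hy.2.trans_le (inv_le_one_of_one_le₀ (one_le_pow₀ hb.le))⟩

lemma Ioo_eq_iUnion_Ico_inv_pow (hb : 1 < b) :
    Ioo 0 (b ^ m)⁻¹ = ⋃ i, Ico (b ^ (i + m + 1))⁻¹ (b ^ (i + m))⁻¹ := by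
  ext y
  simp only [mem_iUnion]
  constructor
  · intro hy
    have hy1 : y ∈ Ioo (0 : ℝ) 1 :=
      ⟨hy.1, hy.2.trans_le (inv_le_one_of_one_le₀ (one_le_pow₀ hb.le))⟩
    obtain ⟨i, hi⟩ := Nat.exists_eq_add_of_le' ((le_shellIdx_iff hb hy1).2 hy.2)
    exact ⟨i, (shellIdx_eq_iff hb hy1).1 hi⟩
  · rintro ⟨i, hi⟩
    have hy1 := Ico_inv_pow_subset hb hi
    refine ⟨hy1.1, (le_shellIdx_iff hb hy1).1 ?_⟩
    rw [(shellIdx_eq_iff hb hy1).2 hi]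
    exact Nat.le_add_left m i

lemma eqOn_comp_shellIdx (hb : 1 < b) :
    EqOn (c ∘ shellIdx b) (fun _ ↦ c i) (Ico (b ^ (i + 1))⁻¹ (b ^ i)⁻¹) := fun _ hy ↦
  congrArg c ((shellIdx_eq_iff hb (Ico_inv_pow_subset hb hy)).2 hy)

lemma setIntegral_Ico_inv_pow_comp_shellIdx (hb : 1 < b) :
    ∫ y in Ico (b ^ (i + 1))⁻¹ (b ^ i)⁻¹, (c ∘ shellIdx b) y = (b - 1) * c i / b ^ (i + 1) := by
  have : 0 < b := zero_lt_one.trans hb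
  have hle : (b ^ (i + 1))⁻¹ ≤ (b ^ i)⁻¹ := by gcongr <;> simp [hb.le]
  rw [setIntegral_congr_fun measurableSet_Ico (eqOn_comp_shellIdx hb), setIntegral_const,
    Real.volume_real_Ico_of_le hle, smul_eq_mul]
  field_simp
  ring

lemma hasSum_sub_succ_of_antitone {v : ℕ → ℝ} (hv : Antitone v) (hlim : Tendsto v atTop (nhds 0)) :
    HasSum (fun i ↦ v i - v (i + 1)) (v 0) := by
  rw [hasSum_iff_tendsto_nat_of_nonneg fun i ↦ sub_nonneg.2 (hv i.le_succ)]
  simpa only [Finset.sum_range_sub', sub_zero] using hlim.const_sub (v 0)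

section Potential

variable (hb : 1 < b) (hc : ∀ i, 0 ≤ c i) (hu : ∀ i, b * u i = (b - 1) * c i + u (i + 1))
  (hlim : Tendsto (fun i ↦ u i / b ^ i) atTop (nhds 0))
include hb hc hu hlim

lemma hasSum_shell_integrals :
    HasSum (fun i ↦ (b - 1) * c (i + m) / b ^ (i + m + 1)) (u m / b ^ m) := by
  have : 0 < b := zero_lt_one.trans hb
  have hterm (i : ℕ) : (b - 1) * c i / b ^ (i + 1) = u i / b ^ i - u (i + 1) / b ^ (i + 1) := by
    field_simp
    linear_combination -b ^ i * hu i
  have hanti : Antitone fun i ↦ u i / b ^ i := antitone_nat_of_succ_le fun i ↦ by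
    rw [← sub_nonneg, ← hterm]
    have := hc i
    have := sub_pos.2 hb
    positivity
  simpa only [hterm, zero_add, add_right_comm _ 1 m, Function.comp_apply, id_eq] using
    hasSum_sub_succ_of_antitone (hanti.comp_monotone (monotone_id.add_const m))
      (hlim.comp (tendsto_add_atTop_nat m))

lemma integral_comp_shellIdx : ∫ y in Ico 0 (b ^ m)⁻¹, (c ∘ shellIdx b) y = u m / b ^ m := by
  have hsum := hasSum_shell_integrals (m := m) hb hc hu hlim
  rw [integral_Ico_eq_integral_Ioo, Ioo_eq_iUnion_Ico_inv_pow hb]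
  have hint : IntegrableOn (c ∘ shellIdx b) (⋃ i, Ico (b ^ (i + m + 1))⁻¹ (b ^ (i + m))⁻¹) := by
    refine integrableOn_iUnion_of_summable_integral_norm (fun i ↦ ?_) ?_
    · exact (integrableOn_const measure_Ico_lt_top.ne).congr_fun (eqOn_comp_shellIdx hb).symm
        measurableSet_Ico
    · simpa only [Function.comp_apply, Real.norm_of_nonneg (hc _),
        ← setIntegral_Ico_inv_pow_comp_shellIdx hb] using hsum.summable
  have hdisj : Pairwise (Function.onFun Disjoint
      fun i ↦ Ico (b ^ (i + m + 1))⁻¹ (b ^ (i + m))⁻¹) :=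
    (Antitone.pairwise_disjoint_on_Ico_succ fun i j hij ↦
      inv_anti₀ (pow_pos (zero_lt_one.trans hb) i) (pow_le_pow_right₀ hb.le hij)).comp_of_injective
        (add_left_injective m)
  refine (hasSum_integral_iUnion (fun _ ↦ measurableSet_Ico) hdisj hint).unique ?_
  simpa only [setIntegral_Ico_inv_pow_comp_shellIdx hb] using hsum

end Potential

end Shells

section AdicMaxShell

variable {N m : ℕ} {y : ℝ} {c u : ℕ → ℝ}

lemma adicIdx_eq_zero_of_le_shellIdx (hN : 1 < N) (hy : y ∈ Ioo (0 : ℝ) 1)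
    (hm : m ≤ shellIdx N y) : adicIdx N m y = 0 := by
  have hNm : (0 : ℝ) < (N : ℝ) ^ m := pow_pos (Nat.cast_pos.2 (zero_lt_one.trans hN)) m
  rw [adicIdx, Nat.floor_eq_zero, ← lt_div_iff₀ hNm, one_div]
  exact (le_shellIdx_iff (Nat.one_lt_cast.2 hN) hy).1 hm

lemma shellIdx_le_of_mem_adicItv {z : ℝ} (hN : 1 < N) (hy : 0 < y) (hm : shellIdx N y < m)
    (hz : z ∈ adicItv N m (adicIdx N m y)) : shellIdx N z ≤ shellIdx N y := by
  have hN1 : (1 : ℝ) < N := Nat.one_lt_cast.2 hN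
  have hN0 : (0 : ℝ) < N := zero_lt_one.trans hN1
  obtain ⟨j, rfl⟩ := Nat.exists_eq_add_of_lt hm
  have hidx : N ^ j ≤ adicIdx N (shellIdx N y + j + 1) y := by
    refine Nat.le_floor ?_
    have hshell := (inv_le_iff_one_le_mul₀ (pow_pos hN0 _)).1 ((shellIdx_le_iff hN1 hy).1 le_rfl)
    calc ((N ^ j : ℕ) : ℝ) ≤ (y * (N : ℝ) ^ (shellIdx N y + 1)) * (N : ℝ) ^ j := by
          rw [Nat.cast_pow]
          exact le_mul_of_one_le_left (pow_pos hN0 j).le hshell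
      _ = y * (N : ℝ) ^ (shellIdx N y + j + 1) := by ring
  have hle : ((N : ℝ) ^ (shellIdx N y + 1))⁻¹ ≤ z := calc
    ((N : ℝ) ^ (shellIdx N y + 1))⁻¹ = ((N ^ j : ℕ) : ℝ) / (N : ℝ) ^ (shellIdx N y + j + 1) := by
      rw [Nat.cast_pow]
      field_simp
      ring
    _ ≤ adicIdx N (shellIdx N y + j + 1) y / (N : ℝ) ^ (shellIdx N y + j + 1) := by gcongr
    _ ≤ z := hz.1
  exact (shellIdx_le_iff hN1 ((inv_pos.2 (pow_pos hN0 _)).trans_le hle)).2 hle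

variable (hN : 1 < N) (hc : ∀ i, 0 ≤ c i) (hu : ∀ i, N * u i = (N - 1) * c i + u (i + 1))
  (hlim : Tendsto (fun i ↦ u i / (N : ℝ) ^ i) atTop (nhds 0))
include hN hc hu hlim

lemma adicAvgAt_comp_shellIdx_of_le (hy : y ∈ Ioo (0 : ℝ) 1) (hm : m ≤ shellIdx N y) :
    adicAvgAt N (c ∘ shellIdx N) m y = u m := by
  have hNm : (N : ℝ) ^ m ≠ 0 := pow_ne_zero m (Nat.cast_ne_zero.2 (zero_lt_one.trans hN).ne')
  have habs : (fun z ↦ |(c ∘ shellIdx N) z|) = c ∘ shellIdx N := funext fun z ↦ abs_of_nonneg (hc _)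
  rw [adicAvgAt, adicIdx_eq_zero_of_le_shellIdx hN hy hm, adicAvg, habs, adicItv, Nat.cast_zero,
    zero_div, zero_add, one_div, integral_comp_shellIdx (Nat.one_lt_cast.2 hN) hc hu hlim,
    mul_div_cancel₀ _ hNm]

variable (hcu : ∀ i, c i ≤ u i)
include hcu

lemma adicAvgAt_comp_shellIdx_le (hy : y ∈ Ioo (0 : ℝ) 1) :
    adicAvgAt N (c ∘ shellIdx N) m y ≤ u (shellIdx N y) := by
  have hN1 : (1 : ℝ) < N := Nat.one_lt_cast.2 hN
  have hmono : Monotone u := monotone_nat_of_le_succ fun i ↦ by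
    linear_combination mul_le_mul_of_nonneg_left (hcu i) (sub_pos.2 hN1).le + hu i
  rcases le_or_gt m (shellIdx N y) with hm | hm
  · exact (adicAvgAt_comp_shellIdx_of_le hN hc hu hlim hy hm).trans_le (hmono hm)
  have hNm : (0 : ℝ) < (N : ℝ) ^ m := pow_pos (zero_lt_one.trans hN1) m
  have hpt : ∀ z ∈ adicItv N m (adicIdx N m y), ‖|(c ∘ shellIdx N) z|‖ ≤ u (shellIdx N y) := by
    intro z hz
    rw [norm_abs_eq_norm, Function.comp_apply, Real.norm_of_nonneg (hc _)]
    exact (hcu _).trans (hmono (shellIdx_le_of_mem_adicItv hN hy.1 hm hz))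
  have hint : ∫ z in adicItv N m (adicIdx N m y), |(c ∘ shellIdx N) z| ≤
      u (shellIdx N y) * volume.real (adicItv N m (adicIdx N m y)) := (Real.le_norm_self _).trans
    (norm_setIntegral_le_of_norm_le_const (measure_Ico_lt_top (μ := volume)) hpt)
  rwa [volume_real_adicItv (zero_lt_one.trans hN), ← div_eq_mul_inv, le_div_iff₀' hNm] at hint

lemma adicMax_comp_shellIdx (hy : y ∈ Ioo (0 : ℝ) 1) :
    adicMax N (c ∘ shellIdx N) y = (u ∘ shellIdx N) y := by
  rw [adicMax_eq_iSup (zero_lt_one.trans hN) (Ioo_subset_Ico_self hy)]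
  refine IsGreatest.csSup_eq ⟨⟨_, adicAvgAt_comp_shellIdx_of_le hN hc hu hlim hy le_rfl⟩, ?_⟩
  rintro _ ⟨m, rfl⟩
  exact adicAvgAt_comp_shellIdx_le hN hc hu hlim hcu hy

end AdicMaxShell

section Greedy

variable {b p C f F : ℝ} {s : ℝ × ℝ} {n : ℕ}

/-- The value of the extremizer on the outer shell of an interval on which it must have mean `s.1`
and `p`-th moment `s.2`: zero whenever the rest of the interval can still carry these, and the mean
otherwise. -/
noncomputable def greedyHead (b p : ℝ) (s : ℝ × ℝ) : ℝ :=
  if (b * s.1) ^ p ≤ b * s.2 then 0 else s.1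

/-- The mean and `p`-th moment left for the inner interval, which is `b` times shorter, once the
outer shell carries the value `greedyHead b p s`. -/
noncomputable def greedyTail (b p : ℝ) (s : ℝ × ℝ) : ℝ × ℝ :=
  (b * s.1 - (b - 1) * greedyHead b p s, b * s.2 - (b - 1) * greedyHead b p s ^ p)

/-- The Bellman function of the extremal problem at mean `s.1` and `p`-th moment `s.2`. -/
noncomputable def bellmanValue (b p : ℝ) (s : ℝ × ℝ) : ℝ :=
  s.1 ^ p + bellmanConst b p * (s.2 - s.1 ^ p)

/-- Pairs of a mean at least `f` and a `p`-th moment between `mean ^ p` and `C * mean ^ p`. -/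
def greedyRegion (p f C : ℝ) : Set (ℝ × ℝ) := {s | f ≤ s.1 ∧ s.2 ∈ Icc (s.1 ^ p) (C * s.1 ^ p)}

lemma greedyTail_of_le (hp : p ≠ 0) (h : (b * s.1) ^ p ≤ b * s.2) :
    greedyTail b p s = (b * s.1, b * s.2) := by
  simp only [greedyTail, greedyHead, if_pos h, Real.zero_rpow hp, mul_zero, sub_zero]

lemma greedyTail_of_lt (h : b * s.2 < (b * s.1) ^ p) :
    greedyTail b p s = (s.1, b * s.2 - (b - 1) * s.1 ^ p) := by
  simp only [greedyTail, greedyHead, if_neg h.not_ge]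
  ring_nf

lemma greedyHead_mem_Icc (hs : 0 ≤ s.1) : greedyHead b p s ∈ Icc 0 s.1 := by
  unfold greedyHead
  split_ifs
  exacts [left_mem_Icc.2 hs, right_mem_Icc.2 hs]

lemma mapsTo_greedyTail (hb : 1 < b) (hp : 1 < p) (hf : 0 < f) (hC : b ^ p ≤ C) :
    MapsTo (greedyTail b p) (greedyRegion p f C) (greedyRegion p f C) := by
  rintro ⟨x, E⟩ ⟨hfx, hxE, hEC⟩
  have hx : 0 < x := hf.trans_le hfx
  have hxp : 0 < x ^ p := Real.rpow_pos_of_pos hx p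
  have hb0 : 0 < b := zero_lt_one.trans hb
  have hbp : b < b ^ p := Real.self_lt_rpow_of_one_lt hb hp
  have hmul : (b * x) ^ p = b ^ p * x ^ p := Real.mul_rpow hb0.le hx.le
  rcases le_or_gt ((b * x) ^ p) (b * E) with h | h
  · rw [greedyTail_of_le (by linarith) h]
    refine ⟨hfx.trans (le_mul_of_one_le_left hx.le hb.le), h, ?_⟩
    calc b * E ≤ b ^ p * (C * x ^ p) :=
          mul_le_mul hbp.le hEC (hxp.le.trans hxE) (hb0.le.trans hbp.le)
      _ = C * (b * x) ^ p := by rw [hmul]; ring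
  · rw [greedyTail_of_lt h]
    refine ⟨hfx, ?_, ?_⟩
    · linear_combination mul_le_mul_of_nonneg_left hxE hb0.le
    · calc b * E - (b - 1) * x ^ p ≤ b * E := sub_le_self _ (mul_nonneg (sub_pos.2 hb).le hxp.le)
        _ ≤ b ^ p * x ^ p := h.le.trans_eq hmul
        _ ≤ C * x ^ p := mul_le_mul_of_nonneg_right hC hxp.le

lemma mul_bellmanValue (hb : 1 < b) (hp : 1 < p) (hs : 0 ≤ s.1) :
    b * bellmanValue b p s = (b - 1) * s.1 ^ p + bellmanValue b p (greedyTail b p s) := by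
  have hmul : (b * s.1) ^ p = b ^ p * s.1 ^ p := Real.mul_rpow (by linarith) hs
  rcases le_or_gt ((b * s.1) ^ p) (b * s.2) with h | h
  · rw [greedyTail_of_le (by linarith) h, bellmanValue, bellmanValue, hmul]
    linear_combination s.1 ^ p * bellmanConst_mul hb hp
  · rw [greedyTail_of_lt h, bellmanValue, bellmanValue]
    ring

/-- Subtracting `s.1 ^ p / 2` from the moment gives a quantity that grows strictly slower than
`b ^ n` along `greedyTail`; the moment alone does not while the extremizer vanishes. -/
noncomputable def greedyEnergy (p : ℝ) (s : ℝ × ℝ) : ℝ := s.2 - s.1 ^ p / 2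

lemma greedyEnergy_greedyTail_le (hb : 1 < b) (hp : 1 < p) (hs : 0 ≤ s.1) :
    greedyEnergy p (greedyTail b p s) ≤
      b * greedyEnergy p s - min (b ^ p - b) (b - 1) / 2 * s.1 ^ p := by
  have hmul : (b * s.1) ^ p = b ^ p * s.1 ^ p := Real.mul_rpow (by linarith) hs
  have : 0 ≤ s.1 ^ p := Real.rpow_nonneg hs p
  rcases le_or_gt ((b * s.1) ^ p) (b * s.2) with h | h
  · rw [greedyTail_of_le (by linarith) h, greedyEnergy, greedyEnergy, hmul]
    linear_combination s.1 ^ p / 2 * min_le_left (b ^ p - b) (b - 1)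
  · rw [greedyTail_of_lt h, greedyEnergy, greedyEnergy]
    linear_combination s.1 ^ p / 2 * min_le_right (b ^ p - b) (b - 1)

lemma le_two_mul_greedyEnergy (hs : s ∈ greedyRegion p f C) : s.2 ≤ 2 * greedyEnergy p s := by
  rw [greedyEnergy]
  linarith [hs.2.1]

lemma greedyEnergy_nonneg (hf : 0 < f) (hs : s ∈ greedyRegion p f C) : 0 ≤ greedyEnergy p s := by
  have := Real.rpow_nonneg (hf.le.trans hs.1) p
  linarith [le_two_mul_greedyEnergy hs, hs.2.1]

lemma fst_le_mul_greedyEnergy (hp : 1 < p) (hf : 0 < f) (hs : s ∈ greedyRegion p f C) :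
    s.1 ≤ f ^ (1 - p) * 2 * greedyEnergy p s := by
  have hx : 0 < s.1 := hf.trans_le hs.1
  have hfp : 0 < f ^ (1 - p) := Real.rpow_pos_of_pos hf _
  calc s.1 = s.1 ^ (1 - p) * s.1 ^ p := by rw [← Real.rpow_add hx, sub_add_cancel, Real.rpow_one]
    _ ≤ f ^ (1 - p) * s.1 ^ p := by
        gcongr ?_ * _
        exact Real.rpow_le_rpow_of_nonpos hf hs.1 (sub_nonpos.2 hp.le)
    _ ≤ f ^ (1 - p) * (2 * greedyEnergy p s) :=
        mul_le_mul_of_nonneg_left (hs.2.1.trans (le_two_mul_greedyEnergy hs)) hfp.le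
    _ = f ^ (1 - p) * 2 * greedyEnergy p s := (mul_assoc _ _ _).symm

lemma bellmanValue_mem_Icc (hb : 1 < b) (hp : 1 < p) (hf : 0 < f) (hs : s ∈ greedyRegion p f C) :
    bellmanValue b p s ∈ Icc 0 (bellmanConst b p * 2 * greedyEnergy p s) := by
  have hsp : 0 ≤ s.1 ^ p := Real.rpow_nonneg (hf.le.trans hs.1) p
  have hK : 1 ≤ bellmanConst b p := one_le_bellmanConst hb hp
  have hK0 : 0 ≤ bellmanConst b p := zero_le_one.trans hK
  refine ⟨add_nonneg hsp (mul_nonneg hK0 (sub_nonneg.2 hs.2.1)), ?_⟩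
  have henergy := mul_le_mul_of_nonneg_left (le_two_mul_greedyEnergy hs) hK0
  have hmean := mul_le_mul_of_nonneg_right hK hsp
  rw [bellmanValue]
  linarith

section Orbit

variable (hb : 1 < b) (hp : 1 < p) (hf : 0 < f) (hC : b ^ p ≤ C)
include hb hp hf hC

lemma exists_greedyEnergy_greedyTail_le_mul : ∃ r < 1, ∀ s ∈ greedyRegion p f C,
    greedyEnergy p (greedyTail b p s) ≤ b * (r * greedyEnergy p s) := by
  have hb0 : 0 < b := zero_lt_one.trans hb
  have hC0 : 0 < C := (Real.rpow_pos_of_pos hb0 p).trans_le hC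
  obtain ⟨η, hη, hηdef⟩ : ∃ η > 0, min (b ^ p - b) (b - 1) / 2 = η :=
    ⟨_, half_pos (lt_min (sub_pos.2 (Real.self_lt_rpow_of_one_lt hb hp)) (sub_pos.2 hb)), rfl⟩
  refine ⟨1 - η / (b * C), sub_lt_self 1 (by positivity), fun s hs ↦ ?_⟩
  have hx : 0 < s.1 := hf.trans_le hs.1
  have henergy : greedyEnergy p s / C ≤ s.1 ^ p := (div_le_iff₀' hC0).2 <|
    (sub_le_self _ (half_pos (Real.rpow_pos_of_pos hx p)).le).trans hs.2.2
  calc greedyEnergy p (greedyTail b p s) ≤ b * greedyEnergy p s - η * s.1 ^ p :=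
        hηdef ▸ greedyEnergy_greedyTail_le hb hp hx.le
    _ ≤ b * greedyEnergy p s - η * (greedyEnergy p s / C) := by gcongr
    _ = b * ((1 - η / (b * C)) * greedyEnergy p s) := by field_simp

variable (hs : s ∈ greedyRegion p f C)
include hs

lemma iterate_greedyTail_mem : (greedyTail b p)^[n] s ∈ greedyRegion p f C :=
  (mapsTo_greedyTail hb hp hf hC).iterate n hs

lemma tendsto_greedyEnergy_div_pow :
    Tendsto (fun n ↦ greedyEnergy p ((greedyTail b p)^[n] s) / b ^ n) atTop (nhds 0) := by
  have hb0 : 0 < b := zero_lt_one.trans hb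
  have hmem (n : ℕ) := iterate_greedyTail_mem (n := n) hb hp hf hC hs
  obtain ⟨r, hr, hcontract⟩ := exists_greedyEnergy_greedyTail_le_mul hb hp hf hC
  have hnorm (n : ℕ) : ‖greedyEnergy p ((greedyTail b p)^[n] s) / b ^ n‖ =
      greedyEnergy p ((greedyTail b p)^[n] s) / b ^ n :=
    Real.norm_of_nonneg (div_nonneg (greedyEnergy_nonneg hf (hmem n)) (pow_pos hb0 n).le)
  refine (summable_of_ratio_norm_eventually_le hr
    (Eventually.of_forall fun n ↦ ?_)).tendsto_atTop_zero
  rw [hnorm, hnorm, Function.iterate_succ_apply', div_le_iff₀ (pow_pos hb0 _)]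
  refine (hcontract _ (hmem n)).trans_eq ?_
  field_simp
  ring

lemma tendsto_comp_greedyTail_div_pow {g : ℝ × ℝ → ℝ} {A : ℝ}
    (hg : ∀ t ∈ greedyRegion p f C, g t ∈ Icc 0 (A * greedyEnergy p t)) :
    Tendsto (fun n ↦ g ((greedyTail b p)^[n] s) / b ^ n) atTop (nhds 0) := by
  have hb0 : 0 < b := zero_lt_one.trans hb
  have hmem (n : ℕ) := hg _ (iterate_greedyTail_mem (n := n) hb hp hf hC hs)
  refine squeeze_zero (fun n ↦ div_nonneg (hmem n).1 (pow_pos hb0 n).le)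
    (fun n ↦ div_le_div_of_nonneg_right (hmem n).2 (pow_pos hb0 n).le) ?_
  simpa only [mul_div_assoc, mul_zero] using
    (tendsto_greedyEnergy_div_pow hb hp hf hC hs).const_mul A

lemma integral_greedy_orbit {g h : ℝ × ℝ → ℝ} {A : ℝ}
    (hg : ∀ t ∈ greedyRegion p f C, g t ∈ Icc 0 (A * greedyEnergy p t))
    (hh : ∀ t ∈ greedyRegion p f C, 0 ≤ h t)
    (hgh : ∀ t ∈ greedyRegion p f C, b * g t = (b - 1) * h t + g (greedyTail b p t)) :
    ∫ y in Ico 0 1, h ((greedyTail b p)^[shellIdx b y] s) = g s := by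
  have hmem (n : ℕ) := iterate_greedyTail_mem (n := n) hb hp hf hC hs
  simpa using integral_comp_shellIdx (m := 0) (c := fun n ↦ h ((greedyTail b p)^[n] s))
    (u := fun n ↦ g ((greedyTail b p)^[n] s)) hb (fun n ↦ hh _ (hmem n))
    (fun n ↦ by rw [Function.iterate_succ_apply']; exact hgh _ (hmem n))
    (tendsto_comp_greedyTail_div_pow hb hp hf hC hs hg)

end Orbit

/-- The greedy extremizer of mean `s.1` and `p`-th moment `s.2`. -/
noncomputable def greedyExtremizer (b p : ℝ) (s : ℝ × ℝ) (y : ℝ) : ℝ :=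
  greedyHead b p ((greedyTail b p)^[shellIdx b y] s)

lemma measurable_greedyExtremizer : Measurable (greedyExtremizer b p s) :=
  measurable_comp_shellIdx (c := fun n ↦ greedyHead b p ((greedyTail b p)^[n] s))

section Extremizer

variable (hb : 1 < b) (hp : 1 < p) (hf : 0 < f) (hC : b ^ p ≤ C) (hs : s ∈ greedyRegion p f C)
include hb hp hf hC hs

lemma greedyExtremizer_nonneg {y : ℝ} : 0 ≤ greedyExtremizer b p s y :=
  (greedyHead_mem_Icc (hf.le.trans (iterate_greedyTail_mem hb hp hf hC hs).1)).1

lemma integral_greedyExtremizer : ∫ y in Ico 0 1, greedyExtremizer b p s y = s.1 :=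
  integral_greedy_orbit (g := Prod.fst) hb hp hf hC hs
    (fun t ht ↦ ⟨hf.le.trans ht.1, fst_le_mul_greedyEnergy hp hf ht⟩)
    (fun t ht ↦ (greedyHead_mem_Icc (hf.le.trans ht.1)).1)
    (fun t _ ↦ by simp only [greedyTail, add_sub_cancel])

lemma integral_greedyExtremizer_rpow : ∫ y in Ico 0 1, greedyExtremizer b p s y ^ p = s.2 :=
  integral_greedy_orbit (g := Prod.snd) (h := fun t ↦ greedyHead b p t ^ p) hb hp hf hC hs
    (fun t ht ↦ ⟨(Real.rpow_nonneg (hf.le.trans ht.1) p).trans ht.2.1, le_two_mul_greedyEnergy ht⟩)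
    (fun t ht ↦ Real.rpow_nonneg (greedyHead_mem_Icc (hf.le.trans ht.1)).1 p)
    (fun t _ ↦ by simp only [greedyTail, add_sub_cancel])

end Extremizer

lemma adicMax_greedyExtremizer {N : ℕ} {y : ℝ} (hN : 1 < N) (hp : 1 < p) (hf : 0 < f)
    (hC : (N : ℝ) ^ p ≤ C) (hs : s ∈ greedyRegion p f C) (hy : y ∈ Ioo (0 : ℝ) 1) :
    adicMax N (greedyExtremizer N p s) y = ((greedyTail N p)^[shellIdx N y] s).1 := by
  have hN1 : (1 : ℝ) < N := Nat.one_lt_cast.2 hN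
  have hhead (n : ℕ) : greedyHead N p ((greedyTail N p)^[n] s) ∈ Icc 0 ((greedyTail N p)^[n] s).1 :=
    greedyHead_mem_Icc (hf.le.trans (iterate_greedyTail_mem hN1 hp hf hC hs).1)
  refine adicMax_comp_shellIdx (u := fun n ↦ ((greedyTail N p)^[n] s).1) hN (fun n ↦ (hhead n).1)
    (fun n ↦ ?_) ?_ (fun n ↦ (hhead n).2) hy
  · simp only [Function.iterate_succ_apply', greedyTail, add_sub_cancel]
  · exact tendsto_comp_greedyTail_div_pow (g := Prod.fst) hN1 hp hf hC hs
      fun t ht ↦ ⟨hf.le.trans ht.1, fst_le_mul_greedyEnergy hp hf ht⟩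

lemma integral_adicMax_greedyExtremizer_rpow {N : ℕ} (hN : 1 < N) (hp : 1 < p) (hf : 0 < f)
    (hC : (N : ℝ) ^ p ≤ C) (hs : s ∈ greedyRegion p f C) :
    ∫ y in Ico (0 : ℝ) 1, adicMax N (greedyExtremizer N p s) y ^ p = bellmanValue N p s := by
  have hN1 : (1 : ℝ) < N := Nat.one_lt_cast.2 hN
  rw [← integral_greedy_orbit (g := bellmanValue N p) (h := fun t ↦ t.1 ^ p) hN1 hp hf hC hs
    (fun t ht ↦ bellmanValue_mem_Icc hN1 hp hf ht)
    (fun t ht ↦ Real.rpow_nonneg (hf.le.trans ht.1) p)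
    (fun t ht ↦ mul_bellmanValue hN1 hp (hf.le.trans ht.1)),
    integral_Ico_eq_integral_Ioo, integral_Ico_eq_integral_Ioo]
  exact setIntegral_congr_fun measurableSet_Ioo fun y hy ↦ by
    simp only [adicMax_greedyExtremizer hN hp hf hC hs hy]

lemma exists_mem_greedyRegion (hf : 0 < f) (hfF : f ^ p ≤ F) :
    ∃ C ≥ b ^ p, (f, F) ∈ greedyRegion p f C := by
  have hfp : 0 < f ^ p := Real.rpow_pos_of_pos hf p
  refine ⟨max (b ^ p) (F / f ^ p), le_max_left _ _, le_rfl, hfF, ?_⟩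
  exact (div_le_iff₀ hfp).1 (le_max_right _ _)

end Greedy

/-- For every integer `N ≥ 2`, every real `p > 1` and all positive reals `f, F` with `f^p ≤ F`,
the infimum of `∫_{[0,1)} (M_N φ)^p dμ` over all nonnegative measurable `φ` on `[0,1)` with
`∫ φ dμ = f` and `∫ φ^p dμ = F` equals `f^p + ((N^p − 1)/(N^p − N))·(F − f^p)`. -/
theorem stmt0 (N : ℕ) (hN : 2 ≤ N) (p f F : ℝ) (hp : 1 < p)
    (hf : 0 < f) (hF : 0 < F) (hfF : f ^ p ≤ F) :
    sInf {y : ℝ | ∃ φ : ℝ → ℝ, Measurable φ ∧ (∀ x ∈ Set.Ico (0:ℝ) 1, 0 ≤ φ x) ∧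
        (∫ x in Set.Ico (0:ℝ) 1, φ x) = f ∧ (∫ x in Set.Ico (0:ℝ) 1, φ x ^ p) = F ∧
        y = ∫ x in Set.Ico (0:ℝ) 1, adicMax N φ x ^ p} =
      f ^ p + (((N : ℝ) ^ p - 1) / ((N : ℝ) ^ p - N)) * (F - f ^ p) := by
  have hN1 : 1 < N := hN
  obtain ⟨C, hC, hs⟩ := exists_mem_greedyRegion (b := N) hf hfF
  have hN1' : (1 : ℝ) < N := Nat.one_lt_cast.2 hN1
  refine IsLeast.csInf_eq ⟨⟨greedyExtremizer N p (f, F), measurable_greedyExtremizer,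
    fun x _ ↦ greedyExtremizer_nonneg hN1' hp hf hC hs, integral_greedyExtremizer hN1' hp hf hC hs,
    integral_greedyExtremizer_rpow hN1' hp hf hC hs,
    (integral_adicMax_greedyExtremizer_rpow hN1 hp hf hC hs).symm⟩, ?_⟩
  rintro _ ⟨φ, hφm, hφ0, hφf, hφF, rfl⟩
  have hφ : IntegrableOn φ (Ico 0 1) := .of_integral_ne_zero (hφf ▸ hf.ne')
  have hφp : IntegrableOn (fun x ↦ φ x ^ p) (Ico 0 1) := .of_integral_ne_zero (hφF ▸ hF.ne')
  simpa only [hφf, hφF, bellmanConst] using le_integral_adicMax_rpow hN1 hp hφm hφ0 hφ hφp
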